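/- Let p, q ∈ ℝᵏ be probability vectors on a finite set X of k points, let ε ∈ (0,1), and define F(x,y) = p(x)p(y)+q(x)q(y)−p(x)q(y)−q(x)p(y), M⁺(x,y) = (p(x)p(y)+q(x)q(y))/2 and M⁻(x,y) = (p(x)q(y)+q(x)p(y))/2. Then the supremum over all functions D : X×X → ℝ with ε ≤ D(x,y) ≤ 1 for all (x,y) of Σ_{x,y} F(x,y)·log D(x,y) equals (−log ε)·Σ_{x,y} |M⁺(x,y) − M⁻(x,y)|, and this supremum is attained by the discriminator D*(x,y) equal to 1 where F(x,y) ≥ 0 and equal to ε where F(x,y) < 0. -/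

import Mathlib

open scoped BigOperators

/-!
Since `F (x, y) = (p x - q x) * (p y - q y)`, the weights sum to zero as soon as `p` and `q` have
the same total mass. The objective separates over the pairs, and each `F (x, y) * g (D (x, y))`,
with `g` monotone, is largest at an endpoint of the allowed interval `[a, b]`, chosen by the sign
of `F (x, y)`. Writing `g` at that endpoint as the mean of `g a` and `g b` plus or minus half their
difference, the mean contributes a multiple of `∑ F = 0`, and the half-difference contributes
`(g b - g a) / 2 * ∑ |F|`.
-/

section BangBang

variable {𝕜 β : Type*} [LinearOrder 𝕜]

/-- The bang-bang rule: the endpoint of `[a, b]` that maximizes `s * g t` over `t ∈ [a, b]`,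
whatever the monotone function `g`. Ties at `s = 0` go to `b`, so that applying the rule to each
`F (x, y)` gives the discriminator `D*`. -/
def bangBang [Zero 𝕜] (a b : β) (s : 𝕜) : β := if 0 ≤ s then b else a

theorem bangBang_of_nonneg [Zero 𝕜] (a b : β) {s : 𝕜} (hs : 0 ≤ s) : bangBang a b s = b :=
  if_pos hs

theorem bangBang_of_neg [Zero 𝕜] (a b : β) {s : 𝕜} (hs : s < 0) : bangBang a b s = a :=
  if_neg hs.not_ge

theorem bangBang_mem_Icc [Zero 𝕜] [Preorder β] {a b : β} (hab : a ≤ b) (s : 𝕜) :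
    bangBang a b s ∈ Set.Icc a b := by
  rcases le_or_gt 0 s with hs | hs
  · rw [bangBang_of_nonneg a b hs]
    exact Set.right_mem_Icc.2 hab
  · rw [bangBang_of_neg a b hs]
    exact Set.left_mem_Icc.2 hab

theorem mul_le_mul_apply_bangBang [Ring 𝕜] [IsOrderedRing 𝕜] [Preorder β] {g : β → 𝕜} {a b t : β}
    (hg : MonotoneOn g (Set.Icc a b)) (ht : t ∈ Set.Icc a b) (s : 𝕜) :
    s * g t ≤ s * g (bangBang a b s) := by
  have hab : a ≤ b := ht.1.trans ht.2
  rcases le_or_gt 0 s with hs | hs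
  · rw [bangBang_of_nonneg a b hs]
    exact mul_le_mul_of_nonneg_left (hg ht (Set.right_mem_Icc.2 hab) ht.2) hs
  · rw [bangBang_of_neg a b hs]
    exact mul_le_mul_of_nonpos_left (hg (Set.left_mem_Icc.2 hab) ht ht.1) hs.le

variable [Field 𝕜] [IsStrictOrderedRing 𝕜]

theorem mul_apply_bangBang (g : β → 𝕜) (a b : β) (s : 𝕜) :
    s * g (bangBang a b s) = (g b - g a) / 2 * |s| + (g a + g b) / 2 * s := by
  rcases le_or_gt 0 s with hs | hs
  · rw [bangBang_of_nonneg a b hs, abs_of_nonneg hs]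
    ring
  · rw [bangBang_of_neg a b hs, abs_of_neg hs]
    ring

theorem sum_mul_apply_bangBang_of_sum_eq_zero {α : Type*} (t : Finset α) {f : α → 𝕜}
    (hf : ∑ z ∈ t, f z = 0) (g : β → 𝕜) (a b : β) :
    ∑ z ∈ t, f z * g (bangBang a b (f z)) = (g b - g a) / 2 * ∑ z ∈ t, |f z| := by
  simp only [mul_apply_bangBang, Finset.sum_add_distrib, ← Finset.mul_sum, hf, mul_zero, add_zero]

end BangBang

theorem monotoneOn_log_Icc {a : ℝ} (ha : 0 < a) (b : ℝ) : MonotoneOn Real.log (Set.Icc a b) :=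
  Real.strictMonoOn_log.monotoneOn.mono fun _ ht => ha.trans_le ht.1

section PairMixtures

variable {ι R 𝕜 : Type*}

/-- The same-pair mixture `M⁺`: both points are drawn from `p` or both from `q`, with probability
one half each. -/
def samePairMixture [Field 𝕜] (p q : ι → 𝕜) (x y : ι) : 𝕜 := (p x * p y + q x * q y) / 2

/-- The different-pair mixture `M⁻`: one point is drawn from `p` and the other from `q`, in either
order with probability one half. -/
def differentPairMixture [Field 𝕜] (p q : ι → 𝕜) (x y : ι) : 𝕜 := (p x * q y + q x * p y) / 2

/-- The weight `F` of a pair in the PairGAN-Z zero-sum objective `∑ F * g ∘ D`. It equals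
`2 * (M⁺ - M⁻)`, written without division. -/
def pairGANWeight [Ring R] (p q : ι → R) (x y : ι) : R :=
  p x * p y + q x * q y - p x * q y - q x * p y

theorem pairGANWeight_eq_mul [Ring R] (p q : ι → R) (x y : ι) :
    pairGANWeight p q x y = (p x - q x) * (p y - q y) := by
  unfold pairGANWeight
  noncomm_ring

theorem sum_pairGANWeight [Ring R] [Fintype ι] (p q : ι → R) :
    ∑ x, ∑ y, pairGANWeight p q x y = (∑ x, p x - ∑ x, q x) ^ 2 := by
  simp only [pairGANWeight_eq_mul, ← Finset.sum_mul_sum, Finset.sum_sub_distrib, sq]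

theorem pairGANWeight_eq_two_mul_sub [Field 𝕜] [NeZero (2 : 𝕜)] (p q : ι → 𝕜) (x y : ι) :
    pairGANWeight p q x y = 2 * (samePairMixture p q x y - differentPairMixture p q x y) := by
  unfold pairGANWeight samePairMixture differentPairMixture
  field_simp
  ring

variable [Field 𝕜] [LinearOrder 𝕜] [IsStrictOrderedRing 𝕜]

theorem sum_abs_pairGANWeight [Fintype ι] (p q : ι → 𝕜) :
    ∑ x, ∑ y, |pairGANWeight p q x y|
      = 2 * ∑ x, ∑ y, |samePairMixture p q x y - differentPairMixture p q x y| := by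
  simp only [pairGANWeight_eq_two_mul_sub, abs_mul, abs_two, ← Finset.mul_sum]

theorem sum_pairGANWeight_mul_apply_bangBang [Fintype ι] {β : Type*} {p q : ι → 𝕜}
    (hpq : ∑ x, p x = ∑ x, q x) (g : β → 𝕜) (a b : β) :
    ∑ x, ∑ y, pairGANWeight p q x y * g (bangBang a b (pairGANWeight p q x y))
      = (g b - g a) * ∑ x, ∑ y, |samePairMixture p q x y - differentPairMixture p q x y| := by
  have hF : ∑ z : ι × ι, pairGANWeight p q z.1 z.2 = 0 := by
    rw [Fintype.sum_prod_type', sum_pairGANWeight, hpq, sub_self, zero_pow two_ne_zero]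
  calc ∑ x, ∑ y, pairGANWeight p q x y * g (bangBang a b (pairGANWeight p q x y))
      = ∑ z : ι × ι,
          pairGANWeight p q z.1 z.2 * g (bangBang a b (pairGANWeight p q z.1 z.2)) := by
        rw [Fintype.sum_prod_type]
    _ = (g b - g a) / 2 * ∑ z : ι × ι, |pairGANWeight p q z.1 z.2| :=
        sum_mul_apply_bangBang_of_sum_eq_zero _ hF g a b
    _ = (g b - g a) / 2 * ∑ x, ∑ y, |pairGANWeight p q x y| := by
        rw [Fintype.sum_prod_type]
    _ = (g b - g a) * ∑ x, ∑ y, |samePairMixture p q x y - differentPairMixture p q x y| := by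
        rw [sum_abs_pairGANWeight]
        ring

theorem stmt5_general [Fintype ι] {β : Type*} [Preorder β] (p q : ι → 𝕜)
    (hpq : ∑ x, p x = ∑ x, q x) {g : β → 𝕜} {a b : β} (hab : a ≤ b)
    (hg : MonotoneOn g (Set.Icc a b)) :
    IsGreatest
        {v : 𝕜 | ∃ D : ι → ι → β,
          (∀ x y, D x y ∈ Set.Icc a b) ∧
          v = ∑ x, ∑ y, pairGANWeight p q x y * g (D x y)}
        ((g b - g a) * ∑ x, ∑ y, |samePairMixture p q x y - differentPairMixture p q x y|)
    ∧ (∀ x y, bangBang a b (pairGANWeight p q x y) ∈ Set.Icc a b)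
    ∧ ∑ x, ∑ y, pairGANWeight p q x y * g (bangBang a b (pairGANWeight p q x y))
        = (g b - g a) * ∑ x, ∑ y, |samePairMixture p q x y - differentPairMixture p q x y| := by
  have hmem x y : bangBang a b (pairGANWeight p q x y) ∈ Set.Icc a b := bangBang_mem_Icc hab _
  have hval := sum_pairGANWeight_mul_apply_bangBang hpq g a b
  refine ⟨⟨⟨_, hmem, hval.symm⟩, ?_⟩, hmem, hval⟩
  rintro v ⟨D, hD, rfl⟩
  rw [← hval]
  refine Finset.sum_le_sum fun x _ => Finset.sum_le_sum fun y _ => ?_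
  exact mul_le_mul_apply_bangBang hg (hD x y) _

end PairMixtures

theorem stmt5 {k : ℕ} (p q : Fin k → ℝ)
    (hp0 : ∀ x, 0 ≤ p x) (hp1 : ∑ x, p x = 1)
    (hq0 : ∀ x, 0 ≤ q x) (hq1 : ∑ x, q x = 1)
    (ε : ℝ) (hε : ε ∈ Set.Ioo (0 : ℝ) 1) :
    let F : Fin k → Fin k → ℝ := fun x y =>
      p x * p y + q x * q y - p x * q y - q x * p y
    let Mp : Fin k → Fin k → ℝ := fun x y => (p x * p y + q x * q y) / 2
    let Mm : Fin k → Fin k → ℝ := fun x y => (p x * q y + q x * p y) / 2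
    let Dstar : Fin k → Fin k → ℝ := fun x y => if 0 ≤ F x y then 1 else ε
    IsGreatest
        {v : ℝ | ∃ D : Fin k → Fin k → ℝ,
          (∀ x y, D x y ∈ Set.Icc ε 1) ∧
          v = ∑ x, ∑ y, F x y * Real.log (D x y)}
        ((-Real.log ε) * ∑ x, ∑ y, |Mp x y - Mm x y|)
    ∧ (∀ x y, Dstar x y ∈ Set.Icc ε 1)
    ∧ ∑ x, ∑ y, F x y * Real.log (Dstar x y)
        = (-Real.log ε) * ∑ x, ∑ y, |Mp x y - Mm x y| := by
  have h := stmt5_general p q (hp1.trans hq1.symm) hε.2.le (monotoneOn_log_Icc hε.1 1)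
  rwa [Real.log_one, zero_sub] at h
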